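/- Let j, j' ∈ ℕ with j ≠ j', and let f, g : ℂ → ℂ be holomorphic on the upper half-plane Π with ∫_Π |f|² dA < ∞ and ∫_Π |g|² dA < ∞. Define u(z) = ∑_{l=0}^{j} binom(j,l) · (z − conj z)^l · f^{(l)}(z) / l! and v(z) = ∑_{l=0}^{j'} binom(j',l) · (z − conj z)^l · g^{(l)}(z) / l!. Then ∫_Π u(z) · conj(v(z)) dA(z) = 0. -/

import Mathlib

/-!
Write `y = Im z` and `M l m = ∫_Π y ^ (l + m) f⁽ˡ⁾ conj g⁽ᵐ⁾ dA`. Since `z - conj z = 2iy`, the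
inner product of `S_Π^j f` and `S_Π^{j'} g` is an explicit linear combination of the moments `M l m`
(`creationPow_mul_conj`).

All moments converge absolutely, because `y ^ l f⁽ˡ⁾` is in `L²(Π)` for `f` in the Bergman space
(`memLp_pow_mul_iteratedDeriv`). Indeed, Cauchy's formula on the circle of radius `y / 2` about `z`
bounds `|y ^ l f⁽ˡ⁾(z)|²` by a constant times `∫ |f (z + (y / 2) e^{iθ})|² dθ`, and for each `θ`
the real-linear map `z ↦ z + (y / 2) e^{iθ}` preserves `Π` and has determinant at least `1 / 2`.

Integrating the `x`- and `y`-derivatives of `y ^ (l + m + 1) f⁽ˡ⁾ conj g⁽ᵐ⁾` over `Π` gives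
`M (l+1) m + M l (m+1) = 0` and `(l + m + 1) M l m + i M (l+1) m - i M l (m+1) = 0`. No boundary
term arises: integrability alone forces it to vanish on almost every line
(`integral_UHP_horizontal`, `integral_UHP_vertical`). Hence
`M l m = (i/2) ^ l (-i/2) ^ m (l + m)! M 0 0` (`moment_formula`), and the inner product equals
`M 0 0` times `∑ (-1) ^ (l + m) C(j, l) C(j', m) C(l + m, m)`. This sum vanishes for `j ≠ j'`: if,
say, `m ≤ j' < j`, the sum over `l` is a `j`-th finite difference of a polynomial in `l` of
degree `m` (`sum_sum_alt_choose_eq_zero`).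
-/

open Complex MeasureTheory Metric Set ENNReal

noncomputable section

/-- The upper half-plane `Π = {z : ℂ | Im z > 0}`. -/
def UHP : Set ℂ := {z : ℂ | 0 < z.im}

/-- The operator `S_Π^j` restricted to the Bergman space:
`(S_Π^j f)(z) = (1/j!) ∂^j[(z - conj z)^j f(z)] = ∑_{l=0}^{j} C(j,l) (z - conj z)^l f⁽ˡ⁾(z)/l!`. -/
def creationPow (j : ℕ) (f : ℂ → ℂ) (z : ℂ) : ℂ :=
  ∑ l ∈ Finset.range (j + 1),
    (j.choose l : ℂ) * (z - (starRingEnd ℂ) z) ^ l * iteratedDeriv l f z / (l.factorial : ℂ)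

/-! ### The combinatorial identity -/

/-- The sum is, up to sign, the `j`-th finite difference of `x ↦ x.choose m`, a polynomial of
degree `m < j`. -/
lemma sum_alt_choose_mul_choose_add {j m : ℕ} (h : m < j) :
    ∑ l ∈ Finset.range (j + 1), (-1 : ℂ) ^ l * (j.choose l : ℂ) * ((l + m).choose m : ℂ) = 0 := by
  have h0 : ((fwdDiff 1)^[j] (fun x ↦ x.choose m : ℕ → ℤ)) m = 0 := by
    obtain ⟨k, rfl⟩ := Nat.exists_eq_add_of_lt h
    rw [show m + k + 1 = k + 1 + m by ring, Function.iterate_add_apply]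
    simp_rw [add_zero m ▸ fwdDiff_iter_choose 0 m]
    rw [Function.iterate_succ_apply]
    simp [fwdDiff_const, fwdDiff_iter_eq_sum_shift]
  rw [fwdDiff_iter_eq_sum_shift] at h0
  have h1 := congrArg (fun t : ℤ => (-1 : ℂ) ^ j * (t : ℂ)) h0
  simp only [Int.cast_zero, mul_zero, Int.cast_sum, Finset.mul_sum] at h1
  rw [← h1]
  refine Finset.sum_congr rfl fun l hl => ?_
  obtain ⟨i, rfl⟩ := Nat.exists_eq_add_of_le (Nat.lt_succ_iff.mp (Finset.mem_range.mp hl))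
  have : (-1 : ℂ) ^ (l + i) * (-1) ^ i = (-1) ^ l := by
    rw [pow_add, mul_assoc, ← mul_pow]; simp
  simp only [smul_eq_mul, mul_one, Nat.add_sub_cancel_left, add_comm m l]
  push_cast
  rw [← this]; ring

lemma sum_sum_alt_choose_eq_zero {j j' : ℕ} (h : j ≠ j') :
    ∑ l ∈ Finset.range (j + 1), ∑ m ∈ Finset.range (j' + 1),
      (-1 : ℂ) ^ l * (j.choose l : ℂ) * ((-1) ^ m * (j'.choose m : ℂ)) *
        ((l + m).choose m : ℂ) = 0 := by
  rcases lt_or_gt_of_ne h with h | h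
  · refine Finset.sum_eq_zero fun l hl => ?_
    have hl' : l < j' := by have := Finset.mem_range.mp hl; omega
    rw [← mul_zero ((-1 : ℂ) ^ l * (j.choose l : ℂ)), ← sum_alt_choose_mul_choose_add hl',
      Finset.mul_sum]
    refine Finset.sum_congr rfl fun m _ => ?_
    rw [add_comm m l, Nat.choose_symm_add]; ring
  · rw [Finset.sum_comm]
    refine Finset.sum_eq_zero fun m hm => ?_
    have hm' : m < j := by have := Finset.mem_range.mp hm; omega
    rw [← mul_zero ((-1 : ℂ) ^ m * (j'.choose m : ℂ)), ← sum_alt_choose_mul_choose_add hm',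
      Finset.mul_sum]
    refine Finset.sum_congr rfl fun l _ => ?_
    ring

/-! ### Reduction to the moments -/

lemma isOpen_UHP : IsOpen UHP := isOpen_lt continuous_const Complex.continuous_im

/-- The building block `y ^ (l + m) f⁽ˡ⁾ conj g⁽ᵐ⁾`, `y = Im z`, of `S_Π^j f · conj (S_Π^{j'} g)`.
The power of `y` makes it scale like `f · conj g`, so that its integral converges for all `l`
and `m`. -/
def momentFun (f g : ℂ → ℂ) (l m : ℕ) (z : ℂ) : ℂ :=
  (z.im : ℂ) ^ (l + m) * iteratedDeriv l f z * (starRingEnd ℂ) (iteratedDeriv m g z)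

lemma creationPow_mul_conj (j j' : ℕ) (f g : ℂ → ℂ) (z : ℂ) :
    creationPow j f z * (starRingEnd ℂ) (creationPow j' g z) =
      ∑ l ∈ Finset.range (j + 1), ∑ m ∈ Finset.range (j' + 1),
        ((j.choose l : ℂ) * (2 * I) ^ l / l.factorial * ((j'.choose m : ℂ) * (-2 * I) ^ m /
          m.factorial)) * momentFun f g l m z := by
  unfold creationPow momentFun
  rw [map_sum, Finset.sum_mul_sum]
  refine Finset.sum_congr rfl fun l _ => Finset.sum_congr rfl fun m _ => ?_
  have h1 : z - (starRingEnd ℂ) z = 2 * I * z.im := by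
    rw [Complex.sub_conj]; push_cast; ring
  simp only [map_div₀, map_mul, map_pow, map_natCast, h1, map_ofNat, Complex.conj_I,
    Complex.conj_ofReal]
  rw [mul_pow (2 * I), mul_pow (2 * -I), pow_add, show (-2 * I : ℂ) = 2 * -I by ring]
  ring

/-- The two recurrences are those satisfied by the integrals of `momentFun f g l m`; they reduce
every moment to the moment with `l = m = 0`. -/
lemma moment_formula (M : ℕ → ℕ → ℂ) (h1 : ∀ l m, M (l + 1) m + M l (m + 1) = 0)
    (h2 : ∀ l m, ((l + m + 1 : ℕ) : ℂ) * M l m + I * M (l + 1) m - I * M l (m + 1) = 0) (l m : ℕ) :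
    M l m = (I / 2) ^ l * (-(I / 2)) ^ m * ((l + m).factorial : ℂ) * M 0 0 := by
  have hI : I * I = -1 := I_mul_I
  have ha : ∀ l m, M (l + 1) m = I / 2 * ((l + m + 1 : ℕ) : ℂ) * M l m := fun l m => by
    linear_combination (-I / 2) * h2 l m + (M (l + 1) m - M l (m + 1)) / 2 * hI + (1 / 2) * h1 l m
  have hb : ∀ l m, M l (m + 1) = -(I / 2) * ((l + m + 1 : ℕ) : ℂ) * M l m := fun l m => by
    linear_combination h1 l m - ha l m
  induction m with
  | zero =>
    induction l with
    | zero => simp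
    | succ l ih =>
      rw [ha, ih, show l + 1 + 0 = l + 0 + 1 by ring, Nat.factorial_succ]; push_cast; ring_nf
  | succ m ih =>
    rw [hb, ih, ← add_assoc, Nat.factorial_succ]; push_cast; ring

lemma sum_moment_eq_zero {j j' : ℕ} (h : j ≠ j') (M : ℕ → ℕ → ℂ)
    (h1 : ∀ l m, M (l + 1) m + M l (m + 1) = 0)
    (h2 : ∀ l m, ((l + m + 1 : ℕ) : ℂ) * M l m + I * M (l + 1) m - I * M l (m + 1) = 0) :
    ∑ l ∈ Finset.range (j + 1), ∑ m ∈ Finset.range (j' + 1),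
        ((j.choose l : ℂ) * (2 * I) ^ l / l.factorial * ((j'.choose m : ℂ) * (-2 * I) ^ m /
          m.factorial)) * M l m = 0 := by
  rw [← zero_mul (M 0 0), ← sum_sum_alt_choose_eq_zero h, Finset.sum_mul]
  refine Finset.sum_congr rfl fun l _ => ?_
  rw [Finset.sum_mul]
  refine Finset.sum_congr rfl fun m _ => ?_
  rw [moment_formula M h1 h2, ← Nat.choose_symm_add, Nat.cast_add_choose]
  have e1 : (-1 : ℂ) ^ l = (2 * I) ^ l * (I / 2) ^ l := by
    rw [← mul_pow]; congr 1; linear_combination -I_mul_I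
  have e2 : (-1 : ℂ) ^ m = (-2 * I) ^ m * (-(I / 2)) ^ m := by
    rw [← mul_pow]; congr 1; linear_combination -I_mul_I
  rw [e1, e2]; ring

/-! ### Integration by parts on the half-plane -/

lemma integrableOn_UHP_iff (F : ℂ → ℂ) : IntegrableOn F UHP ↔
    Integrable (fun p : ℝ × ℝ => F (p.1 + p.2 * I)) (volume.prod (volume.restrict (Ioi 0))) := by
  rw [← Complex.volume_preserving_equiv_real_prod.symm.integrableOn_comp_preimage
    Complex.measurableEquivRealProd.symm.measurableEmbedding, IntegrableOn]
  have : (Complex.measurableEquivRealProd.symm ⁻¹' UHP) = univ ×ˢ Ioi (0 : ℝ) := by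
    ext p; simp [UHP]
  rw [this, Measure.volume_eq_prod, ← Measure.prod_restrict, Measure.restrict_univ]
  have : (F ∘ Complex.measurableEquivRealProd.symm) = fun p : ℝ × ℝ => F (p.1 + p.2 * I) := by
    ext p; simp [Complex.mk_eq_add_mul_I]
  rw [this]

lemma setIntegral_UHP (F : ℂ → ℂ) : ∫ z in UHP, F z =
    ∫ p : ℝ × ℝ, F (p.1 + p.2 * I) ∂(volume.prod (volume.restrict (Ioi 0))) := by
  rw [← Complex.volume_preserving_equiv_real_prod.symm.setIntegral_preimage_emb
    Complex.measurableEquivRealProd.symm.measurableEmbedding]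
  have : (Complex.measurableEquivRealProd.symm ⁻¹' UHP) = univ ×ˢ Ioi (0 : ℝ) := by
    ext p; simp [UHP]
  rw [this, Measure.volume_eq_prod, ← Measure.prod_restrict, Measure.restrict_univ]
  simp [Complex.mk_eq_add_mul_I]

/-- Integration by parts along horizontal lines. Since `Im z` is constant on such a line, `H` need
not be weighted: on almost every line `H` and `H'` are both integrable. -/
lemma integral_UHP_horizontal (H H' : ℂ → ℂ) (hH : IntegrableOn H UHP)
    (hH' : IntegrableOn (fun z => z.im * H' z) UHP)
    (hd : ∀ x y : ℝ, 0 < y → HasDerivAt (fun x : ℝ => H (x + y * I)) (H' (x + y * I)) x) :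
    ∫ z in UHP, z.im * H' z = 0 := by
  rw [integrableOn_UHP_iff] at hH hH'
  rw [setIntegral_UHP, integral_prod_symm _ hH']
  refine integral_eq_zero_of_ae ?_
  filter_upwards [hH.prod_left_ae, hH'.prod_left_ae, ae_restrict_mem measurableSet_Ioi]
    with y h1 h2 hy
  have hy : (0 : ℝ) < y := hy
  simp only [add_im, ofReal_im, mul_im, ofReal_re, I_im, I_re, mul_one, mul_zero, add_zero,
    zero_add] at h2 ⊢
  rw [integral_const_mul, integral_eq_zero_of_hasDerivAt_of_integrable (fun x => hd x y hy) _ h1]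
  · simp
  · have hne : (y : ℂ) ≠ 0 := by exact_mod_cast hy.ne'
    simpa [hne] using h2.const_mul (y : ℂ)⁻¹

/-- There is no boundary term at `0` or at `∞`: in the variable `t = log y` both `y * h y` and its
derivative become integrable over the whole line. -/
lemma integral_Ioi_deriv_mul_eq_zero (h φ' : ℝ → ℂ) (hh : IntegrableOn h (Ioi 0))
    (hφ : IntegrableOn φ' (Ioi 0))
    (hd : ∀ y : ℝ, 0 < y → HasDerivAt (fun y : ℝ => y * h y) (φ' y) y) :
    ∫ y in Ioi 0, φ' y = 0 := by
  have him : Real.exp '' univ = Ioi 0 := by rw [image_univ, Real.range_exp]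
  have hde : ∀ x ∈ (univ : Set ℝ), HasDerivWithinAt Real.exp (Real.exp x) univ x :=
    fun x _ => (Real.hasDerivAt_exp x).hasDerivWithinAt
  have hi := Real.exp_injective.injOn (s := univ)
  rw [← him, integrableOn_image_iff_integrableOn_abs_deriv_smul MeasurableSet.univ hde hi,
    integrableOn_univ] at hh hφ
  rw [← him, integral_image_eq_integral_abs_deriv_smul MeasurableSet.univ hde hi,
    Measure.restrict_univ]
  simp only [Real.abs_exp] at hh hφ ⊢
  refine integral_eq_zero_of_hasDerivAt_of_integrable (fun t => ?_) hφ hh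
  have := (hd (Real.exp t) (Real.exp_pos t)).scomp t (Real.hasDerivAt_exp t)
  simpa [Function.comp_def] using this

/-- Integration by parts along vertical half-lines. -/
lemma integral_UHP_vertical (H F' : ℂ → ℂ) (hH : IntegrableOn H UHP)
    (hF' : IntegrableOn F' UHP)
    (hd : ∀ x y : ℝ, 0 < y → HasDerivAt (fun y : ℝ => y * H (x + y * I)) (F' (x + y * I)) y) :
    ∫ z in UHP, F' z = 0 := by
  rw [integrableOn_UHP_iff] at hH hF'
  rw [setIntegral_UHP, integral_prod _ hF']
  refine integral_eq_zero_of_ae ?_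
  filter_upwards [hH.prod_right_ae, hF'.prod_right_ae] with x h1 h2
  exact integral_Ioi_deriv_mul_eq_zero _ _ h1 h2 (hd x)

lemma hasDerivAt_iteratedDeriv {f : ℂ → ℂ} (hf : DifferentiableOn ℂ f UHP) (l : ℕ) {z : ℂ}
    (hz : z ∈ UHP) : HasDerivAt (iteratedDeriv l f) (iteratedDeriv (l + 1) f z) z := by
  have key : DifferentiableOn ℂ (iteratedDeriv l f) UHP := by
    induction l with
    | zero => simpa using hf
    | succ l ih => rw [iteratedDeriv_succ]; exact ih.deriv isOpen_UHP
  rw [iteratedDeriv_succ]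
  exact (key.differentiableAt (isOpen_UHP.mem_nhds hz)).hasDerivAt

/-- First recurrence: `∂ₓ` of `y ^ (l + m + 1) f⁽ˡ⁾ conj g⁽ᵐ⁾` has integral zero. -/
lemma integral_momentFun_add {f g : ℂ → ℂ} (hf : DifferentiableOn ℂ f UHP)
    (hg : DifferentiableOn ℂ g UHP) (hi : ∀ l m, IntegrableOn (momentFun f g l m) UHP) (l m : ℕ) :
    (∫ z in UHP, momentFun f g (l + 1) m z) + ∫ z in UHP, momentFun f g l (m + 1) z = 0 := by
  rw [← integral_add (hi _ _) (hi _ _)]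
  set H' : ℂ → ℂ := fun z => (z.im : ℂ) ^ (l + m) *
    (iteratedDeriv (l + 1) f z * (starRingEnd ℂ) (iteratedDeriv m g z) +
      iteratedDeriv l f z * (starRingEnd ℂ) (iteratedDeriv (m + 1) g z)) with hH'
  have e : (fun z => momentFun f g (l + 1) m z + momentFun f g l (m + 1) z) =
      fun z => z.im * H' z := by
    ext z; simp only [momentFun, hH']; ring
  have hs := (hi (l + 1) m).add (hi l (m + 1))
  change IntegrableOn (fun z => momentFun f g (l + 1) m z + momentFun f g l (m + 1) z) UHP at hs
  rw [e] at hs ⊢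
  refine integral_UHP_horizontal (momentFun f g l m) H' (hi l m) hs fun x y hy => ?_
  have hz : (x + y * I : ℂ) ∈ UHP := by simpa [UHP] using hy
  have hc : HasDerivAt (fun x : ℝ => (x + y * I : ℂ)) 1 x :=
    (Complex.ofRealCLM.hasDerivAt (x := x)).add_const _
  have h1 := (hasDerivAt_iteratedDeriv hf l hz).comp x hc
  have h2 := ((hasDerivAt_iteratedDeriv hg m hz).comp x hc).star
  have h3 := (h1.mul h2).const_mul ((y : ℂ) ^ (l + m))
  simp only [momentFun, hH']
  refine (h3.congr_deriv ?_).congr_of_eventuallyEq (.of_forall fun t => ?_)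
  · simp
  · simp [mul_assoc]

/-- Second recurrence: `∂_y` of `y ^ (l + m + 1) f⁽ˡ⁾ conj g⁽ᵐ⁾` has integral zero. -/
lemma integral_momentFun_sub {f g : ℂ → ℂ} (hf : DifferentiableOn ℂ f UHP)
    (hg : DifferentiableOn ℂ g UHP) (hi : ∀ l m, IntegrableOn (momentFun f g l m) UHP) (l m : ℕ) :
    ((l + m + 1 : ℕ) : ℂ) * (∫ z in UHP, momentFun f g l m z) +
      I * (∫ z in UHP, momentFun f g (l + 1) m z) -
        I * ∫ z in UHP, momentFun f g l (m + 1) z = 0 := by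
  have i1 := (hi l m).const_mul ((l + m + 1 : ℕ) : ℂ)
  have i2 := (hi (l + 1) m).const_mul I
  have i3 := (hi l (m + 1)).const_mul I
  simp only [← integral_const_mul]
  rw [← integral_add i1 i2, ← integral_sub (by exact i1.add i2) i3]
  refine integral_UHP_vertical (momentFun f g l m) _ (hi l m) ((i1.add i2).sub i3)
    fun x y hy => ?_
  have hz : (x + y * I : ℂ) ∈ UHP := by simpa [UHP] using hy
  have hc : HasDerivAt (fun y : ℝ => (x + y * I : ℂ)) I y := by
    simpa using ((Complex.ofRealCLM.hasDerivAt (x := y)).mul_const I).const_add (x : ℂ)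
  have h1 := (hasDerivAt_iteratedDeriv hf l hz).comp y hc
  have h2 := ((hasDerivAt_iteratedDeriv hg m hz).comp y hc).star
  have h3 := ((Complex.ofRealCLM.hasDerivAt (x := y)).pow (l + m + 1)).mul (h1.mul h2)
  simp only [momentFun]
  refine (h3.congr_deriv ?_).congr_of_eventuallyEq (.of_forall fun t => ?_)
  · simp; ring
  · simp; ring

/-! ### Square-integrability of the weighted derivatives -/

lemma closedBall_half_im_subset_UHP {z : ℂ} (hz : z ∈ UHP) : closedBall z (z.im / 2) ⊆ UHP := by
  intro w hw
  have h1 := (Complex.abs_im_le_norm (w - z)).trans (mem_closedBall_iff_norm.mp hw)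
  have hz' : 0 < z.im := hz
  rw [sub_im, abs_le] at h1
  change 0 < w.im
  linarith [h1.1]

/-- Cauchy's formula for the `l`-th derivative on the circle of radius `Im z / 2` about `z`. -/
lemma enorm_pow_mul_iteratedDeriv_le {f : ℂ → ℂ} (hf : DifferentiableOn ℂ f UHP) (l : ℕ) {z : ℂ}
    (hz : z ∈ UHP) : ‖(z.im : ℂ) ^ l * iteratedDeriv l f z‖ₑ ≤
      ENNReal.ofReal (l.factorial * 2 ^ l) *
        ∫⁻ θ in Ioc 0 (2 * Real.pi), ‖f (circleMap z (z.im / 2) θ)‖ₑ := by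
  have hy : 0 < z.im := hz
  have hr : 0 < z.im / 2 := by positivity
  have hc := (hf.mono (closedBall_half_im_subset_UHP hz)).circleIntegral_one_div_sub_center_pow_smul
    hr l
  have hpi := Real.pi_gt_three
  have hfac : (0 : ℝ) < l.factorial := by positivity
  have h1 : (z.im : ℂ) ^ l * iteratedDeriv l f z = ∫ θ in Ioc 0 (2 * Real.pi),
      ((z.im : ℂ) ^ l * (l.factorial / (2 * Real.pi * I))) *
        (deriv (circleMap z (z.im / 2)) θ • (1 / (circleMap z (z.im / 2) θ - z) ^ (l + 1)) •
          f (circleMap z (z.im / 2) θ)) := by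
    rw [integral_const_mul, ← intervalIntegral.integral_of_le (by positivity)]
    change _ = _ * ∮ w in C(z, z.im / 2), (1 / (w - z) ^ (l + 1)) • f w
    rw [hc, smul_eq_mul]
    have : (l.factorial : ℂ) ≠ 0 := by exact_mod_cast hfac.ne'
    have : (Real.pi : ℂ) ≠ 0 := by exact_mod_cast Real.pi_ne_zero
    field_simp
  rw [h1]
  refine (enorm_integral_le_lintegral_enorm _).trans ?_
  rw [← lintegral_const_mul' _ _ ENNReal.ofReal_ne_top]
  refine lintegral_mono fun θ => ?_
  rw [← ofReal_norm, ← ofReal_norm, ← ENNReal.ofReal_mul (by positivity)]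
  refine ENNReal.ofReal_le_ofReal ?_
  have e : ∀ a : ℝ, 0 ≤ a → z.im ^ l * (l.factorial / (2 * Real.pi)) *
      (z.im / 2 * (((z.im / 2) ^ (l + 1))⁻¹ * a)) = 1 / (2 * Real.pi) * (l.factorial * 2 ^ l * a) := by
    intro a _
    rw [div_pow, pow_succ, pow_succ]
    field_simp
  simp only [deriv_circleMap, circleMap_sub_center, norm_mul, norm_smul, norm_div, norm_pow,
    norm_circleMap_zero, norm_I, mul_one, one_div, norm_inv, Complex.norm_natCast,
    Complex.norm_real, Real.norm_eq_abs, abs_of_pos hy, abs_of_pos hr, abs_of_pos Real.pi_pos,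
    Complex.norm_ofNat]
  rw [e _ (norm_nonneg _)]
  refine mul_le_of_le_one_left (by positivity) ?_
  rw [div_le_one (by positivity)]
  linarith

/-- Cauchy–Schwarz against the constant function on `(0, 2π]`. -/
lemma sq_lintegral_le {h : ℝ → ℝ≥0∞} (hh : Measurable h) :
    (∫⁻ θ in Ioc 0 (2 * Real.pi), h θ) ^ 2 ≤
      ENNReal.ofReal (2 * Real.pi) * ∫⁻ θ in Ioc 0 (2 * Real.pi), h θ ^ 2 := by
  have := ENNReal.lintegral_mul_le_Lp_mul_Lq (volume.restrict (Ioc 0 (2 * Real.pi)))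
    Real.HolderConjugate.two_two (f := fun _ => 1) aemeasurable_const hh.aemeasurable
  simp only [Pi.mul_apply, one_mul, ENNReal.one_rpow, lintegral_const, Measure.restrict_apply_univ,
    Real.volume_Ioc, sub_zero] at this
  rw [← ENNReal.mul_rpow_of_nonneg _ _ (by norm_num)] at this
  have h2 := pow_le_pow_left₀ (by positivity) this 2
  rw [← ENNReal.rpow_natCast (_ ^ _), ← ENNReal.rpow_mul] at h2
  simpa using h2

/-- For fixed `θ`, the map `z ↦ z + (Im z / 2) e^{iθ}` is real-linear, with determinant
`1 + sin θ / 2 ≥ 1 / 2`, so composing with it at most doubles an integral. -/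
lemma lintegral_comp_circleMap_le {F : ℂ → ℝ≥0∞} (hF : Measurable F) (θ : ℝ) :
    ∫⁻ z, F (circleMap z (z.im / 2) θ) ≤ 2 * ∫⁻ z, F z := by
  set L : ℂ →ₗ[ℝ] ℂ := LinearMap.transvection Complex.imLm (Complex.exp (θ * I) / 2) with hL
  have hLz : ∀ z, circleMap z (z.im / 2) θ = L z := fun z => by
    simp [hL, LinearMap.transvection, circleMap]; ring
  have hdet : LinearMap.det L = 1 + Real.sin θ / 2 := by
    rw [hL, LinearMap.transvection.det]
    simp [Complex.exp_ofReal_mul_I_im]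
  have hs := Real.neg_one_le_sin θ
  have hpos : 0 < 1 + Real.sin θ / 2 := by linarith
  have hLm : Measurable L := (LinearMap.continuous_of_finiteDimensional L).measurable
  simp_rw [hLz]
  rw [← lintegral_map hF hLm, Measure.map_linearMap_addHaar_eq_smul_addHaar volume
    (by rw [hdet]; exact hpos.ne'), lintegral_smul_measure, smul_eq_mul]
  gcongr
  rw [hdet, abs_of_pos (inv_pos.mpr hpos), ← ENNReal.ofReal_ofNat]
  refine ENNReal.ofReal_le_ofReal ?_
  rw [inv_le_comm₀ hpos (by norm_num)]
  linarith

/-- Apply Cauchy's formula and Cauchy–Schwarz at each `z`, exchange the integrals over `z` and `θ`,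
and change variables in `z` for fixed `θ`. -/
lemma memLp_pow_mul_iteratedDeriv {f : ℂ → ℂ} (hf : DifferentiableOn ℂ f UHP)
    (hf2 : IntegrableOn (fun z => ‖f z‖ ^ 2) UHP volume) (l : ℕ) :
    MemLp (fun z => (z.im : ℂ) ^ l * iteratedDeriv l f z) 2 (volume.restrict UHP) := by
  have hms : MeasurableSet UHP := isOpen_UHP.measurableSet
  have hcont : ContinuousOn (fun z : ℂ => (z.im : ℂ) ^ l * iteratedDeriv l f z) UHP :=
    ContinuousOn.mul (by fun_prop) fun z hz =>
      (hasDerivAt_iteratedDeriv hf l hz).continuousAt.continuousWithinAt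
  refine ⟨hcont.aestronglyMeasurable hms, ?_⟩
  rw [eLpNorm_lt_top_iff_lintegral_rpow_enorm_lt_top (by norm_num) (by norm_num)]
  simp only [ENNReal.toReal_ofNat, ENNReal.rpow_ofNat]
  classical
  -- Extending `f` by zero makes it measurable on all of `ℂ`, as Tonelli's theorem requires.
  set f₀ : ℂ → ℂ := UHP.piecewise f 0 with hf₀
  have hf₀m : Measurable f₀ :=
    ContinuousOn.measurable_piecewise hf.continuousOn continuous_zero.continuousOn hms
  have hfin : ∫⁻ z, ‖f₀ z‖ₑ ^ 2 < ∞ := by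
    have e : (fun z => ‖f₀ z‖ₑ ^ 2) = UHP.indicator fun z => ‖f z‖ₑ ^ 2 := by
      ext z
      by_cases hz : z ∈ UHP <;> simp [hf₀, hz]
    rw [e, lintegral_indicator hms]
    have := hf2.2
    simpa [HasFiniteIntegral, enorm_pow] using this
  set K := ENNReal.ofReal (l.factorial * 2 ^ l) with hK
  have hjoint : Measurable fun p : ℂ × ℝ => ‖f₀ (circleMap p.1 (p.1.im / 2) p.2)‖ₑ ^ 2 := by
    have : Measurable fun p : ℂ × ℝ => circleMap p.1 (p.1.im / 2) p.2 := by
      unfold circleMap; fun_prop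
    exact (hf₀m.comp this).enorm.pow_const 2
  calc ∫⁻ z in UHP, ‖(z.im : ℂ) ^ l * iteratedDeriv l f z‖ₑ ^ 2
      ≤ ∫⁻ z in UHP, K ^ 2 * (ENNReal.ofReal (2 * Real.pi) *
          ∫⁻ θ in Ioc 0 (2 * Real.pi), ‖f₀ (circleMap z (z.im / 2) θ)‖ₑ ^ 2) := by
        refine setLIntegral_mono' hms fun z hz => ?_
        have hm : Measurable fun θ => ‖f₀ (circleMap z (z.im / 2) θ)‖ₑ :=
          (hf₀m.comp (continuous_circleMap z _).measurable).enorm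
        refine le_trans (pow_le_pow_left₀ (by positivity)
          (enorm_pow_mul_iteratedDeriv_le hf l hz) 2) ?_
        rw [mul_pow]
        gcongr
        refine le_trans (le_of_eq ?_) (sq_lintegral_le hm)
        congr 2
        ext θ
        have : circleMap z (z.im / 2) θ ∈ UHP := closedBall_half_im_subset_UHP hz
          (circleMap_mem_closedBall z (by have : 0 < z.im := hz; positivity) θ)
        simp [hf₀, this]
    _ ≤ ∫⁻ z, K ^ 2 * (ENNReal.ofReal (2 * Real.pi) *
          ∫⁻ θ in Ioc 0 (2 * Real.pi), ‖f₀ (circleMap z (z.im / 2) θ)‖ₑ ^ 2) :=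
        setLIntegral_le_lintegral _ _
    _ = K ^ 2 * (ENNReal.ofReal (2 * Real.pi) * ∫⁻ θ in Ioc 0 (2 * Real.pi),
          ∫⁻ z, ‖f₀ (circleMap z (z.im / 2) θ)‖ₑ ^ 2) := by
        rw [lintegral_const_mul' _ _ (ENNReal.pow_ne_top ENNReal.ofReal_ne_top),
          lintegral_const_mul' _ _ ENNReal.ofReal_ne_top,
          lintegral_lintegral_swap hjoint.aemeasurable]
    _ ≤ K ^ 2 * (ENNReal.ofReal (2 * Real.pi) * ∫⁻ θ in Ioc 0 (2 * Real.pi),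
          2 * ∫⁻ z, ‖f₀ z‖ₑ ^ 2) := by
        gcongr with θ
        exact lintegral_comp_circleMap_le (hf₀m.enorm.pow_const 2) θ
    _ < ∞ := by
        rw [lintegral_const, Measure.restrict_apply_univ, Real.volume_Ioc]
        refine ENNReal.mul_lt_top (ENNReal.pow_lt_top ENNReal.ofReal_lt_top)
          (ENNReal.mul_lt_top ENNReal.ofReal_lt_top
            (ENNReal.mul_lt_top (ENNReal.mul_lt_top (by simp) hfin) ENNReal.ofReal_lt_top))

lemma integrableOn_momentFun {f g : ℂ → ℂ} (hf : DifferentiableOn ℂ f UHP)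
    (hg : DifferentiableOn ℂ g UHP) (hf2 : IntegrableOn (fun z => ‖f z‖ ^ 2) UHP volume)
    (hg2 : IntegrableOn (fun z => ‖g z‖ ^ 2) UHP volume) (l m : ℕ) :
    IntegrableOn (momentFun f g l m) UHP := by
  have h := (memLp_pow_mul_iteratedDeriv hf hf2 l).integrable_mul
    (memLp_pow_mul_iteratedDeriv hg hg2 m).star
  refine h.congr (.of_forall fun z => ?_)
  simp [momentFun, pow_add]
  ring

/-! ### Orthogonality -/

/-- Orthogonality of the true polyanalytic Bergman spaces `A_(j+1)` and `A_(j'+1)` for `j ≠ j'`: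
`⟨S_Π^j f, S_Π^{j'} g⟩_{L²(Π)} = 0`. -/
theorem creationPow_orthogonal (j j' : ℕ) (hjj' : j ≠ j') (f g : ℂ → ℂ)
    (hf : DifferentiableOn ℂ f UHP) (hg : DifferentiableOn ℂ g UHP)
    (hf2 : IntegrableOn (fun z => ‖f z‖ ^ 2) UHP volume)
    (hg2 : IntegrableOn (fun z => ‖g z‖ ^ 2) UHP volume) :
    ∫ z in UHP, creationPow j f z * (starRingEnd ℂ) (creationPow j' g z) = 0 := by
  have hi := integrableOn_momentFun hf hg hf2 hg2
  simp_rw [creationPow_mul_conj]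
  rw [integral_finsetSum _ fun l _ => integrable_finsetSum _ fun m _ => (hi l m).const_mul _]
  simp_rw [integral_finsetSum _ fun m _ => (hi _ m).const_mul _, integral_const_mul]
  exact sum_moment_eq_zero hjj' (fun l m => ∫ z in UHP, momentFun f g l m z)
    (integral_momentFun_add hf hg hi) (integral_momentFun_sub hf hg hi)
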